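/- Let d ≥ 1, D ≥ 1, and let (A_n)_{n≥1} be rotor-router aggregation in ℤ^d built from any configuration of rotor stacks with discrepancy at most D, with T_n the total number of steps taken by the first n particles. Then there is a constant C = C(d), independent of n, D, and the rotor configuration, such that for all n ≥ 1, T_n ≤ (d/(d+2)) ω_d^{−2/d} n^{1+2/d} + Φ(n) + C D n^{1+1/d}. -/

import Mathlib

open scoped BigOperators Pointwise symmDiff
open MeasureTheory Filter

noncomputable section
open scoped Classical
namespace RotorRouterPaper

/-- Sites of the lattice `ℤ^d`. -/
abbrev Site (d : ℕ) := Fin d → ℤ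

/-- The `i`-th standard basis vector of `ℤ^d`. -/
def unitVec (d : ℕ) (i : Fin d) : Site d := fun j => if j = i then 1 else 0

/-- Squared Euclidean norm of a lattice point. -/
def nsq {d : ℕ} (x : Site d) : ℝ := ∑ i, ((x i : ℝ)) ^ 2

/-- Euclidean norm of a lattice point. -/
def enorm {d : ℕ} (x : Site d) : ℝ := Real.sqrt (nsq x)

/-- Adjacency `x ∼ y`: Euclidean distance one. -/
def Adj {d : ℕ} (x y : Site d) : Prop := nsq (x - y) = 1

/-- `ω_d`, the Lebesgue volume of the unit ball in `ℝ^d`. -/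
def ballVol (d : ℕ) : ℝ := (volume (Metric.ball (0 : EuclideanSpace ℝ (Fin d)) 1)).toReal

/-- The lattice ball `B_n = {y ∈ ℤ^d : ω_d ‖y‖^d < n}`. -/
def lball (d n : ℕ) : Set (Site d) := {y | ballVol d * enorm y ^ d < (n : ℝ)}

/-- Characterization of the expected exit time function of a (finite) region `A ⊆ ℤ^d`:
it vanishes off `A` and its discrete Laplacian is `-1` on `A`. -/
def IsExitFun (d : ℕ) (A : Set (Site d)) (e : Site d → ℝ) : Prop :=
  (∀ x, x ∉ A → e x = 0) ∧
  ∀ x ∈ A, (1 / (2 * (d : ℝ))) * (∑ i, (e (x + unitVec d i) + e (x - unitVec d i))) - e x = -1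

/-- The expected exit time function `x ↦ e_x(A)` (the unique function satisfying
`IsExitFun` when `A` is finite). -/
def exitFun (d : ℕ) (A : Set (Site d)) : Site d → ℝ :=
  if h : ∃ e, IsExitFun d A e then h.choose else 0

/-- `ē(A) = sup_x e_x(A)`. -/
def ebar (d : ℕ) (A : Set (Site d)) : ℝ := sSup (Set.range (exitFun d A))

/-- `φ(n) = sup {ē(A) - e_o(B_n) : A ⊆ ℤ^d, |A| = n}`. -/
def phi (d n : ℕ) : ℝ :=
  sSup {t | ∃ A : Set (Site d), A.Finite ∧ A.ncard = n ∧ t = ebar d A - exitFun d (lball d n) 0}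

/-- `Φ(n) = ∑_{j=1}^n φ(j)`. -/
def PhiSum (d n : ℕ) : ℝ := ∑ j ∈ Finset.Icc 1 n, phi d j

/-- `ψ(A) = ∑_{x ∈ A} ‖x‖²`. -/
def psi {d : ℕ} (A : Set (Site d)) : ℝ := ∑ᶠ x ∈ A, nsq x

/-- A cardinal direction in `ℤ^d`: one of `±e_1, …, ±e_d`. -/
abbrev Dir (d : ℕ) := Fin d × Bool

/-- The lattice step vector of a cardinal direction. -/
def dirVec (d : ℕ) (ε : Dir d) : Site d := if ε.2 then unitVec d ε.1 else -unitVec d ε.1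

/-- A configuration of rotor stacks `r` (with `r x i` the direction used for the
`(i+1)`-st visit to `x`) has discrepancy at most `D` if for every site, direction and `m ≥ 1`,
among the first `m` rotors of the stack each direction occurs `m/(2d)` times up to error `D`. -/
def HasDiscrepancy (d : ℕ) (D : ℝ) (r : Site d → ℕ → Dir d) : Prop :=
  ∀ (x : Site d) (ε : Dir d) (m : ℕ), 1 ≤ m →
    |(({i | i < m ∧ r x i = ε} : Set ℕ).ncard : ℝ) - (m : ℝ) / (2 * (d : ℝ))| ≤ D

/-- One step of rotor-router walk on a state (current position, visit counts so far):
the particle at `p` being visited for the `(c p + 1)`-st time moves in direction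
`r p (c p)` and the visit count at `p` increases by one. -/
def rstep {d : ℕ} (r : Site d → ℕ → Dir d) (s : Site d × (Site d → ℕ)) :
    Site d × (Site d → ℕ) :=
  (s.1 + dirVec d (r s.1 (s.2 s.1)), Function.update s.2 s.1 (s.2 s.1 + 1))

/-- The state after `t` steps of rotor-router walk started at the origin with visit counts `c`. -/
def walkState {d : ℕ} (r : Site d → ℕ → Dir d) (c : Site d → ℕ) (t : ℕ) :
    Site d × (Site d → ℕ) :=
  (rstep r)^[t] (0, c)

/-- The number of steps until the rotor-router walk started at the origin
(with carried-over visit counts `c`) first leaves the region `A`. -/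
def exitSteps {d : ℕ} (r : Site d → ℕ → Dir d) (A : Set (Site d)) (c : Site d → ℕ) : ℕ :=
  sInf {t | (walkState r c t).1 ∉ A}

/-- The state of rotor-router aggregation after `n` particles have walked and settled:
`(aggState r n).1` is the occupied region `A_{n+1}`, `(aggState r n).2.1` the accumulated
visit counts, and `(aggState r n).2.2` the total number `T_n` of steps taken so far. -/
def aggState {d : ℕ} (r : Site d → ℕ → Dir d) : ℕ → Set (Site d) × (Site d → ℕ) × ℕ
  | 0 => ({0}, fun _ => 0, 0)
  | n + 1 =>
      let s := aggState r n
      let τ := exitSteps r s.1 s.2.1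
      (insert (walkState r s.2.1 τ).1 s.1, (walkState r s.2.1 τ).2, s.2.2 + τ)

/-- The region `A_n` of rotor-router aggregation (for `n ≥ 1`). -/
def aggRegion {d : ℕ} (r : Site d → ℕ → Dir d) (n : ℕ) : Set (Site d) :=
  (aggState r (n - 1)).1

/-- `T_n`, the total number of steps taken by the first `n` particles. -/
def totalSteps {d : ℕ} (r : Site d → ℕ → Dir d) (n : ℕ) : ℕ := (aggState r n).2.2

/-- `A^□ = A + [-1/2,1/2]^d ⊆ ℝ^d`. -/
def box (d : ℕ) (A : Set (Site d)) : Set (EuclideanSpace ℝ (Fin d)) :=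
  {z | ∃ x ∈ A, ∀ i, |z i - (x i : ℝ)| ≤ 1 / 2}

/-- The closed Euclidean ball of unit volume centered at the origin of `ℝ^d`. -/
def unitVolBall (d : ℕ) : Set (EuclideanSpace ℝ (Fin d)) :=
  Metric.closedBall 0 (ballVol d ^ (-(1 : ℝ) / (d : ℝ)))

/-- `A ⊆ ℤ^d` is orthoconvex if every line parallel to a coordinate axis meets `A`
in an interval. -/
def Orthoconvex (d : ℕ) (A : Set (Site d)) : Prop :=
  ∀ x ∈ A, ∀ i : Fin d, ∀ k : ℤ, 0 < k → x + k • unitVec d i ∈ A →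
    ∀ j : ℤ, 0 < j → j < k → x + j • unitVec d i ∈ A

/-- The nonnegative orthant `Q ⊆ ℤ^d`. -/
def orthant (d : ℕ) : Set (Site d) := {x | ∀ i, 0 ≤ x i}

/-- The cube `C(o,r) = {x : ‖x‖_∞ ≤ r}`. -/
def cubeSet (d : ℕ) (r : ℕ) : Set (Site d) := {x | ∀ i, |x i| ≤ (r : ℤ)}

/-- The boundary `∂C(o,r) = {x : ‖x‖_∞ = r + 1 and x ∼ y for some y ∈ C(o,r)}`. -/
def cubeBdry (d : ℕ) (r : ℕ) : Set (Site d) :=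
  {x | (∀ i, |x i| ≤ (r : ℤ) + 1) ∧ (∃ i, |x i| = (r : ℤ) + 1) ∧ ∃ y ∈ cubeSet d r, Adj x y}

/-- Characterization of `h_r(x) = P_x(T_Q > T_{∂C(o,r)})`: it vanishes on
`Q ∩ (C(o,r) ∪ ∂C(o,r))`, equals `1` on `∂C(o,r) ∖ Q`, is discrete harmonic on
`C(o,r) ∖ Q`, and (as a normalization) vanishes off `C(o,r) ∪ ∂C(o,r)`. -/
def IsOrthHarm (d : ℕ) (r : ℕ) (h : Site d → ℝ) : Prop :=
  (∀ x, x ∉ cubeSet d r ∪ cubeBdry d r → h x = 0) ∧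
  (∀ x ∈ orthant d ∩ (cubeSet d r ∪ cubeBdry d r), h x = 0) ∧
  (∀ x ∈ cubeBdry d r \ orthant d, h x = 1) ∧
  (∀ x ∈ cubeSet d r \ orthant d,
    h x = (1 / (2 * (d : ℝ))) * ∑ i, (h (x + unitVec d i) + h (x - unitVec d i)))

/-- The function `h_r` of the previous characterization. -/
def orthHarm (d : ℕ) (r : ℕ) : Site d → ℝ :=
  if h : ∃ f, IsOrthHarm d r f then h.choose else 0

/-- `p(k,r) = sup {h_r(x) : ‖x‖_∞ ≤ k}`. -/
def pkr (d k r : ℕ) : ℝ :=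
  sSup {t | ∃ x : Site d, (∀ i, |x i| ≤ (k : ℤ)) ∧ t = orthHarm d r x}

/-- The exponent `γ_d` of Theorem 3.1. -/
def gam (d : ℕ) : ℝ :=
  if d = 1 then 1 else if d = 2 then 1 / 3
  else (2 : ℝ) ^ (-(d : ℝ)) / (2 * (d : ℝ) ^ 2 * Real.log 3)

/-!
Let `B = A_n` and `e = e(B)`. Each step taken from a site of `B` lowers `e` by `1` on average, and
the discrepancy bound makes the deviation from this average at most `D` times the total variation
of `e`, however often each site is used. The first `n` particles take all their steps from sites of
`B`, start at `o`, and settle on the sites of `A_{n+1}` other than `o`; telescoping `e` along their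
walks gives `T_n ≤ (n + 1) e_o - ∑_B e + D ∑ |∇e|`.

Cutting `e` at its successive values, from the lowest to the highest, leaves regions of
`n, n - 1, …, 1` sites, and on each of them the height of `o` above the cut is at most its exit time
from that region. With `j` sites left this exit time is at most `φ(j) + e_o(B_j)`, so summation by
parts gives `(n + 1) e_o - ∑_B e ≤ Φ(n) + ∑_j e_o(B_j)`, and comparison with a paraboloid bounds
`e_o(B_j)`. The total variation is controlled by the Dirichlet energy of `e`, which is a multiple of
`∑_B e` and hence bounded through a Faber–Krahn inequality.
-/

section Laplacian

variable {d : ℕ}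

lemma card_dir : Fintype.card (Dir d) = 2 * d := by
  simp [mul_comm]

lemma sum_dirVec {M : Type*} [AddCommMonoid M] (F : Site d → M) :
    ∑ ε : Dir d, F (dirVec d ε) = ∑ i, (F (unitVec d i) + F (-unitVec d i)) := by
  simp [Fintype.sum_prod_type, dirVec]

/-- The discrete Laplacian on `ℤ^d`, i.e. the generator of simple random walk; summing increments
over `Dir d` rather than over coordinates makes it kill constants even when `d = 0`. -/
def laplacian (d : ℕ) : (Site d → ℝ) →ₗ[ℝ] (Site d → ℝ) where
  toFun f x := (∑ ε : Dir d, (f (x + dirVec d ε) - f x)) / (2 * d)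
  map_add' f g := by
    ext x
    simp only [Pi.add_apply, ← add_div, ← Finset.sum_add_distrib]
    congr! 2
    ring
  map_smul' c f := by
    ext x
    simp only [Pi.smul_apply, smul_eq_mul, RingHom.id_apply, ← mul_sub, ← Finset.mul_sum,
      mul_div_assoc]

lemma laplacian_apply (f : Site d → ℝ) (x : Site d) :
    laplacian d f x = (∑ ε : Dir d, (f (x + dirVec d ε) - f x)) / (2 * d) :=
  rfl

lemma laplacian_const (t : ℝ) : laplacian d (fun _ ↦ t) = 0 := by
  ext x
  simp [laplacian_apply]

variable [NeZero d]

lemma isExitFun_iff_laplacian {A : Set (Site d)} {e : Site d → ℝ} :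
    IsExitFun d A e ↔ (∀ x, x ∉ A → e x = 0) ∧ ∀ x ∈ A, laplacian d e x = -1 := by
  have hd : (d : ℝ) ≠ 0 := NeZero.ne _
  have hlap (x : Site d) : laplacian d e x =
      1 / (2 * (d : ℝ)) * ∑ i, (e (x + unitVec d i) + e (x - unitVec d i)) - e x := by
    rw [laplacian_apply, Finset.sum_sub_distrib, sum_dirVec (fun v ↦ e (x + v)), Finset.sum_const,
      Finset.card_univ, card_dir]
    simp only [← sub_eq_add_neg, nsmul_eq_mul]
    push_cast
    field_simp
  simp only [IsExitFun, hlap]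

/-- The first coordinate breaks ties between maximum points: at a lexicographic maximum of
`(f x, x 0)` the step in direction `+e_0` strictly decreases `f`. -/
theorem nonpos_of_laplacian_nonneg {A : Set (Site d)} (hA : A.Finite) {f : Site d → ℝ}
    (hlap : ∀ x ∈ A, 0 ≤ laplacian d f x)
    (hbdry : ∀ x ∈ A, ∀ ε, x + dirVec d ε ∉ A → f (x + dirVec d ε) ≤ 0)
    {x : Site d} (hx : x ∈ A) : f x ≤ 0 := by
  by_contra! hpos
  obtain ⟨y, hyA, hymax⟩ := Set.exists_max_image A (fun z ↦ toLex (f z, z 0)) hA ⟨x, hx⟩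
  simp only [Prod.Lex.toLex_le_toLex] at hymax
  have hfy : 0 < f y := by
    rcases hymax x hx with h | h <;> linarith [h]
  have hle (ε : Dir d) : f (y + dirVec d ε) ≤ f y := by
    by_cases h : y + dirVec d ε ∈ A
    · rcases hymax _ h with h | h
      exacts [h.le, h.1.le]
    · exact (hbdry y hyA ε h).trans hfy.le
  have hlt : f (y + dirVec d (0, true)) < f y := by
    by_cases h : y + dirVec d (0, true) ∈ A
    · exact (hymax _ h).resolve_right fun h ↦ by simp [dirVec, unitVec] at h
    · exact (hbdry y hyA _ h).trans_lt hfy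
  have hneg : ∑ ε : Dir d, (f (y + dirVec d ε) - f y) < 0 :=
    Finset.sum_neg' (fun ε _ ↦ sub_nonpos.2 (hle ε)) ⟨_, Finset.mem_univ _, sub_neg.2 hlt⟩
  have hd : (0 : ℝ) < 2 * d := by simpa using NeZero.pos d
  exact (hlap y hyA).not_gt (div_neg_of_neg_of_pos hneg hd)

theorem le_of_laplacian_le {A : Set (Site d)} (hA : A.Finite) {f g : Site d → ℝ}
    (hlap : ∀ x ∈ A, laplacian d g x ≤ laplacian d f x)
    (hbdry : ∀ x ∈ A, ∀ ε, x + dirVec d ε ∉ A → f (x + dirVec d ε) ≤ g (x + dirVec d ε))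
    {x : Site d} (hx : x ∈ A) : f x ≤ g x := by
  refine sub_nonpos.1 (nonpos_of_laplacian_nonneg hA (f := f - g) (fun y hy ↦ ?_)
    (fun y hy ε h ↦ sub_nonpos.2 (hbdry y hy ε h)) hx)
  rw [map_sub]
  exact sub_nonneg.2 (hlap y hy)

end Laplacian

section ExitFun

variable {d : ℕ} [NeZero d]

theorem exists_isExitFun {A : Set (Site d)} (hA : A.Finite) : ∃ e, IsExitFun d A e := by
  have := hA.to_subtype
  let extend : (A → ℝ) →ₗ[ℝ] (Site d → ℝ) := Function.ExtendByZero.linearMap ℝ Subtype.val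
  let dirichletLaplacian : (A → ℝ) →ₗ[ℝ] (A → ℝ) :=
    LinearMap.funLeft ℝ ℝ Subtype.val ∘ₗ laplacian d ∘ₗ extend
  have extend_mem (g : A → ℝ) (x : A) : extend g x = g x :=
    Subtype.val_injective.extend_apply g 0 x
  have extend_notMem (g : A → ℝ) {x : Site d} (hx : x ∉ A) : extend g x = 0 :=
    Function.extend_apply' (f := Subtype.val) g (0 : Site d → ℝ) x
      (by rintro ⟨y, rfl⟩; exact hx y.2)
  have hinj : Function.Injective dirichletLaplacian := by
    rw [← LinearMap.ker_eq_bot, LinearMap.ker_eq_bot']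
    intro g hg
    have hharm (x) (hx : x ∈ A) : laplacian d (extend g) x = 0 := congrFun hg ⟨x, hx⟩
    ext x
    rw [← extend_mem g x, Pi.zero_apply]
    apply le_antisymm
    · exact le_of_laplacian_le hA (g := 0) (fun y hy ↦ by simp [hharm y hy])
        (fun y _ ε h ↦ (extend_notMem g h).le) x.2
    · exact le_of_laplacian_le hA (f := 0) (fun y hy ↦ by simp [hharm y hy])
        (fun y _ ε h ↦ (extend_notMem g h).ge) x.2
  obtain ⟨g, hg⟩ := LinearMap.injective_iff_surjective.1 hinj fun _ ↦ -1
  exact ⟨extend g, isExitFun_iff_laplacian.2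
    ⟨fun x hx ↦ extend_notMem g hx, fun x hx ↦ congrFun hg ⟨x, hx⟩⟩⟩

lemma isExitFun_exitFun {A : Set (Site d)} (hA : A.Finite) : IsExitFun d A (exitFun d A) := by
  have h := exists_isExitFun hA
  rw [exitFun, dif_pos h]
  exact h.choose_spec

lemma laplacian_exitFun {A : Set (Site d)} (hA : A.Finite) {x : Site d} (hx : x ∈ A) :
    laplacian d (exitFun d A) x = -1 :=
  (isExitFun_iff_laplacian.1 (isExitFun_exitFun hA)).2 x hx

lemma exitFun_of_notMem {A : Set (Site d)} (hA : A.Finite) {x : Site d} (hx : x ∉ A) :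
    exitFun d A x = 0 :=
  (isExitFun_exitFun hA).1 x hx

lemma exitFun_nonneg {A : Set (Site d)} (hA : A.Finite) (x : Site d) : 0 ≤ exitFun d A x := by
  by_cases hx : x ∈ A
  · exact le_of_laplacian_le hA (f := 0) (fun y hy ↦ by simp [laplacian_exitFun hA hy])
      (fun y _ ε h ↦ (exitFun_of_notMem hA h).ge) hx
  · exact (exitFun_of_notMem hA hx).ge

lemma hasFiniteSupport_exitFun {A : Set (Site d)} (hA : A.Finite) :
    (exitFun d A).HasFiniteSupport :=
  hA.subset fun _ hx ↦ not_imp_comm.1 (exitFun_of_notMem hA) hx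

lemma tsum_exitFun (A : Finset (Site d)) : ∑' x, exitFun d A x = ∑ x ∈ A, exitFun d A x :=
  tsum_eq_sum fun _ hx ↦ exitFun_of_notMem A.finite_toSet (by simpa using hx)

theorem exitFun_sub_le_exitFun {S A : Set (Site d)} (hA : A.Finite) (hSA : S ⊆ A) {t : ℝ}
    (ht : ∀ x, x ∉ S → exitFun d A x ≤ t) (x : Site d) :
    exitFun d A x - t ≤ exitFun d S x := by
  have hS := hA.subset hSA
  by_cases hx : x ∈ S
  · refine le_of_laplacian_le hS (f := exitFun d A - fun _ ↦ t) (fun y hy ↦ ?_)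
      (fun y _ ε h ↦ ?_) hx
    · rw [map_sub, laplacian_const, sub_zero, laplacian_exitFun hA (hSA hy),
        laplacian_exitFun hS hy]
    · rw [exitFun_of_notMem hS h]
      exact sub_nonpos.2 (ht _ h)
  · rw [exitFun_of_notMem hS hx]
    exact sub_nonpos.2 (ht x hx)

end ExitFun

section Layers

/-- Peel off the points of `S` in increasing order of `f`: the `k` highest points form a set `U`
to which `hb` applies, its `t` being the value of `f` at the point removed last. -/
theorem card_succ_mul_le_sum_add_sum {ι : Type*} {f : ι → ℝ} {o : ι} {b : ℕ → ℝ} (S : Finset ι)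
    (hb : ∀ U ⊆ S, U.Nonempty → ∀ t, (∀ x, x ∉ U → f x ≤ t) → f o - t ≤ b U.card)
    {t : ℝ} (hle : ∀ x, x ∉ S → f x ≤ t) (hge : ∀ x ∈ S, t ≤ f x) :
    (S.card + 1) * f o ≤ t + ∑ x ∈ S, f x + ∑ j ∈ Finset.Icc 1 S.card, b j := by
  induction S using Finset.induction_on_min_value f generalizing t with
  | empty => simpa using hle o
  | insert a s has hmin ih =>
    have hs := ih (t := f a) (fun U hU ↦ hb U (hU.trans (Finset.subset_insert a s)))
      (fun x hx ↦ ?_) hmin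
    · have htop := hb _ subset_rfl (Finset.insert_nonempty a s) t hle
      rw [Finset.card_insert_of_notMem has] at htop ⊢
      rw [Finset.sum_insert has, Finset.sum_Icc_succ_top (by lia)]
      push_cast
      linarith
    · rcases eq_or_ne x a with rfl | hxa
      · exact le_rfl
      · exact (hle x (by simp [hxa, hx])).trans (hge a (Finset.mem_insert_self a s))

end Layers

section Translation

lemma sqrt_tsum_add_sq_le {ι : Type*} {u w : ι → ℝ} (hu : Summable fun x ↦ u x ^ 2)
    (hw : Summable fun x ↦ w x ^ 2) :
    √(∑' x, (u x + w x) ^ 2) ≤ √(∑' x, u x ^ 2) + √(∑' x, w x ^ 2) := by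
  have hu' : Summable fun x ↦ |u x| ^ (2 : ℝ) := by simpa
  have hw' : Summable fun x ↦ |w x| ^ (2 : ℝ) := by simpa
  have hsum := Real.summable_Lp_add_of_nonneg one_le_two (fun x ↦ abs_nonneg (u x))
    (fun x ↦ abs_nonneg (w x)) hu' hw'
  have hle := Real.Lp_add_le_tsum_of_nonneg' one_le_two (fun x ↦ abs_nonneg (u x))
    (fun x ↦ abs_nonneg (w x)) hu' hw'
  simp only [Real.rpow_ofNat, sq_abs, ← Real.sqrt_eq_rpow] at hsum hle
  have habs (x : ι) : (u x + w x) ^ 2 ≤ (|u x| + |w x|) ^ 2 :=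
    sq_le_sq.2 ((abs_add_le _ _).trans (le_abs_self _))
  have hsum' := hsum.of_nonneg_of_le (fun x ↦ sq_nonneg (u x + w x)) habs
  exact (Real.sqrt_le_sqrt (hsum'.tsum_le_tsum habs hsum)).trans hle

lemma summable_sq_of_hasFiniteSupport {ι : Type*} {f : ι → ℝ} (hf : f.HasFiniteSupport) :
    Summable fun x ↦ f x ^ 2 := by
  simpa only [sq] using summable_of_hasFiniteSupport (hf.fun_mul_right f)

variable {G : Type*} [AddCommGroup G] {f : G → ℝ}

lemma summable_comp_add_sub_sq (hf : f.HasFiniteSupport) (v : G) :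
    Summable fun x ↦ (f (x + v) - f x) ^ 2 :=
  summable_sq_of_hasFiniteSupport ((hf.fun_comp_of_injective (add_left_injective v)).fun_sub hf)

lemma summable_comp_add_mul (hf : f.HasFiniteSupport) (v : G) :
    Summable fun x ↦ f (x + v) * f x :=
  summable_of_hasFiniteSupport (hf.fun_mul_right _)

/-- The `ℓ²` distance between `f` and its translate by `v`. -/
def shiftDist (f : G → ℝ) (v : G) : ℝ := √(∑' x, (f (x + v) - f x) ^ 2)

lemma shiftDist_nonneg (f : G → ℝ) (v : G) : 0 ≤ shiftDist f v :=
  Real.sqrt_nonneg _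

lemma shiftDist_sq (f : G → ℝ) (v : G) : shiftDist f v ^ 2 = ∑' x, (f (x + v) - f x) ^ 2 :=
  Real.sq_sqrt (tsum_nonneg fun _ ↦ sq_nonneg _)

lemma shiftDist_zero (f : G → ℝ) : shiftDist f 0 = 0 := by
  simp [shiftDist]

lemma shiftDist_add_le (hf : f.HasFiniteSupport) (v w : G) :
    shiftDist f (v + w) ≤ shiftDist f v + shiftDist f w := by
  have htranslate : ∑' x, (f (x + w + v) - f (x + w)) ^ 2 = ∑' x, (f (x + v) - f x) ^ 2 :=
    (Equiv.addRight w).tsum_eq fun x ↦ (f (x + v) - f x) ^ 2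
  have hmink := sqrt_tsum_add_sq_le
    ((summable_comp_add_sub_sq hf v).comp_injective (add_left_injective w))
    (summable_comp_add_sub_sq hf w)
  rw [htranslate] at hmink
  simpa only [shiftDist, sub_add_sub_cancel, add_assoc, add_comm w v] using hmink

lemma shiftDist_nsmul_le (hf : f.HasFiniteSupport) (k : ℕ) (v : G) :
    shiftDist f (k • v) ≤ k * shiftDist f v := by
  simpa using Finset.le_sum_of_subadditive (shiftDist f) (shiftDist_zero f).le
    (shiftDist_add_le hf) (Finset.range k) fun _ ↦ v

lemma tsum_comp_add_sq (f : G → ℝ) (v : G) : ∑' x, f (x + v) ^ 2 = ∑' x, f x ^ 2 :=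
  (Equiv.addRight v).tsum_eq fun x ↦ f x ^ 2

lemma shiftDist_sq_eq_two_mul_sub (hf : f.HasFiniteSupport) (v : G) :
    shiftDist f v ^ 2 = 2 * ∑' x, f x ^ 2 - 2 * ∑' x, f (x + v) * f x := by
  have hsq := summable_sq_of_hasFiniteSupport hf
  have hshift : Summable fun x ↦ f (x + v) ^ 2 := hsq.comp_injective (add_left_injective v)
  have hmul := summable_comp_add_mul hf v
  calc shiftDist f v ^ 2
      = ∑' x, (f (x + v) ^ 2 + f x ^ 2 - 2 * (f (x + v) * f x)) := by
        rw [shiftDist_sq]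
        congr! 2
        ring
    _ = ∑' x, f (x + v) ^ 2 + ∑' x, f x ^ 2 - ∑' x, 2 * (f (x + v) * f x) := by
        rw [(hshift.add hsq).tsum_sub (hmul.mul_left 2), hshift.tsum_add hsq]
    _ = 2 * ∑' x, f x ^ 2 - 2 * ∑' x, f (x + v) * f x := by
        rw [tsum_comp_add_sq, tsum_mul_left]
        ring

lemma shiftDist_sq_eq_neg_two_mul (hf : f.HasFiniteSupport) (v : G) :
    shiftDist f v ^ 2 = -2 * ∑' x, f x * (f (x + v) - f x) := by
  have hsplit : ∑' x, f x * (f (x + v) - f x) = ∑' x, f (x + v) * f x - ∑' x, f x ^ 2 := by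
    rw [← (summable_comp_add_mul hf v).tsum_sub (summable_sq_of_hasFiniteSupport hf)]
    congr! 2
    ring
  rw [shiftDist_sq_eq_two_mul_sub hf, hsplit]
  ring

lemma sum_tsum_comp_add_mul_le {A : Finset G} (hfA : ∀ x, x ∉ A → f x = 0) (V : Finset G) :
    ∑ v ∈ V, ∑' x, f (x + v) * f x ≤ (∑ x ∈ A, |f x|) ^ 2 := by
  have habs : HasSum (fun x ↦ |f x|) (∑ x ∈ A, |f x|) :=
    hasSum_sum_of_ne_finset_zero fun x hx ↦ by rw [hfA x hx, abs_zero]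
  have hrow (x : G) : ∑ v ∈ V, |f (x + v)| ≤ ∑ y ∈ A, |f y| := by
    have hshift : HasSum (fun v ↦ |f (x + v)|) (∑ y ∈ A, |f y|) :=
      (Equiv.addLeft x).hasSum_iff (f := fun y ↦ |f y|) |>.2 habs
    exact sum_le_hasSum V (fun _ _ ↦ abs_nonneg _) hshift
  calc ∑ v ∈ V, ∑' x, f (x + v) * f x
      = ∑ v ∈ V, ∑ x ∈ A, f (x + v) * f x :=
        Finset.sum_congr rfl fun v _ ↦ tsum_eq_sum fun x hx ↦ by rw [hfA x hx, mul_zero]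
    _ ≤ ∑ v ∈ V, ∑ x ∈ A, |f (x + v)| * |f x| := by
        gcongr ∑ v ∈ V, ∑ x ∈ A, ?_
        exact (le_abs_self _).trans (abs_mul _ _).le
    _ = ∑ x ∈ A, (∑ v ∈ V, |f (x + v)|) * |f x| := by
        rw [Finset.sum_comm]
        simp only [Finset.sum_mul]
    _ ≤ ∑ x ∈ A, (∑ y ∈ A, |f y|) * |f x| := by
        gcongr with x
        exact hrow x
    _ = (∑ x ∈ A, |f x|) ^ 2 := by rw [← Finset.mul_sum, sq]

/-- Averaged over at least `2 |A|` translations `v`, the correlation `∑ f (x + v) f x` is at most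
half of `∑ f²`, so on average the translates of `f` are at squared distance at least `∑ f²`. -/
theorem tsum_sq_le_of_shiftDist_le {A V : Finset G} (hfA : ∀ x, x ∉ A → f x = 0)
    (hAV : 2 * A.card ≤ V.card) {K : ℝ} (hK : ∀ v ∈ V, shiftDist f v ≤ K) :
    ∑' x, f x ^ 2 ≤ K ^ 2 := by
  have hsum : ∑' x, f x ^ 2 = ∑ x ∈ A, f x ^ 2 :=
    tsum_eq_sum fun x hx ↦ by rw [hfA x hx, zero_pow two_ne_zero]
  rcases V.eq_empty_or_nonempty with rfl | hV
  · obtain rfl : A = ∅ := by simpa using hAV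
    simpa [hsum] using sq_nonneg K
  have hf : f.HasFiniteSupport :=
    A.finite_toSet.subset fun x hx ↦ not_imp_comm.1 (hfA x) hx
  have hcorr : 2 * ∑ v ∈ V, ∑' x, f (x + v) * f x ≤ V.card * ∑' x, f x ^ 2 :=
    calc 2 * ∑ v ∈ V, ∑' x, f (x + v) * f x
        ≤ 2 * (A.card * ∑ x ∈ A, |f x| ^ 2) := by
          gcongr
          exact (sum_tsum_comp_add_mul_le hfA V).trans sq_sum_le_card_mul_sum_sq
      _ = (2 * A.card : ℕ) * ∑' x, f x ^ 2 := by
          simp only [sq_abs, hsum]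
          push_cast
          ring
      _ ≤ V.card * ∑' x, f x ^ 2 := by
          gcongr
  have hdist : ∑ v ∈ V, shiftDist f v ^ 2 ≤ V.card * K ^ 2 := by
    rw [← nsmul_eq_mul]
    exact Finset.sum_le_card_nsmul V _ _
      fun v hv ↦ pow_le_pow_left₀ (shiftDist_nonneg f v) (hK v hv) 2
  simp only [shiftDist_sq_eq_two_mul_sub hf, Finset.sum_sub_distrib, Finset.sum_const,
    nsmul_eq_mul, ← Finset.mul_sum] at hdist
  have hcard : (0 : ℝ) < V.card := mod_cast hV.card_pos
  exact le_of_mul_le_mul_left (by linarith) hcard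

end Translation

section Energy

variable {d : ℕ}

lemma shiftDist_le_sum_shiftDist_dirVec {f : Site d → ℝ} (hf : f.HasFiniteSupport) {L : ℕ}
    {v : Site d} (hv : v ∈ Fintype.piFinset fun _ ↦ Finset.Ico (0 : ℤ) L) :
    shiftDist f v ≤ L * ∑ i, shiftDist f (unitVec d i) := by
  simp only [Fintype.mem_piFinset, Finset.mem_Ico] at hv
  have hdecomp : v = ∑ i, (v i).toNat • unitVec d i := by
    ext j
    simp [unitVec, (hv j).1]
  calc shiftDist f v
      = shiftDist f (∑ i, (v i).toNat • unitVec d i) := by rw [← hdecomp]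
    _ ≤ ∑ i, shiftDist f ((v i).toNat • unitVec d i) :=
        Finset.le_sum_of_subadditive _ (shiftDist_zero f).le (shiftDist_add_le hf) _ _
    _ ≤ ∑ i, L * shiftDist f (unitVec d i) := by
        gcongr with i
        refine (shiftDist_nsmul_le hf _ _).trans ?_
        gcongr
        · exact shiftDist_nonneg _ _
        · have := hv i
          lia
    _ = L * ∑ i, shiftDist f (unitVec d i) := Finset.mul_sum _ _ _ |>.symm

lemma sq_sum_shiftDist_unitVec_le (f : Site d → ℝ) :
    (∑ i, shiftDist f (unitVec d i)) ^ 2 ≤ d * ∑ ε : Dir d, shiftDist f (dirVec d ε) ^ 2 := by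
  refine sq_sum_le_card_mul_sum_sq.trans ?_
  rw [Finset.card_univ, Fintype.card_fin, sum_dirVec (fun v ↦ shiftDist f v ^ 2)]
  gcongr
  exact le_add_of_nonneg_right (sq_nonneg _)

/-- Translating `f` to every point of a cube of side `L` costs at most `L` steps in each coordinate
direction, so the averaging argument yields a Faber–Krahn inequality. -/
theorem tsum_sq_le_sum_shiftDist_dirVec {A : Finset (Site d)} {f : Site d → ℝ}
    (hfA : ∀ x, x ∉ A → f x = 0) {L : ℕ} (hL : 2 * A.card ≤ L ^ d) :
    ∑' x, f x ^ 2 ≤ d * L ^ 2 * ∑ ε : Dir d, shiftDist f (dirVec d ε) ^ 2 := by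
  have hf : f.HasFiniteSupport := A.finite_toSet.subset fun x hx ↦ not_imp_comm.1 (hfA x) hx
  calc ∑' x, f x ^ 2
      ≤ (L * ∑ i, shiftDist f (unitVec d i)) ^ 2 :=
        tsum_sq_le_of_shiftDist_le hfA (by simpa using hL)
          fun v hv ↦ shiftDist_le_sum_shiftDist_dirVec hf hv
    _ ≤ L ^ 2 * (d * ∑ ε : Dir d, shiftDist f (dirVec d ε) ^ 2) := by
        rw [mul_pow]
        gcongr
        exact sq_sum_shiftDist_unitVec_le f
    _ = d * L ^ 2 * ∑ ε : Dir d, shiftDist f (dirVec d ε) ^ 2 := by ring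

/-- The total absolute gradient `∑ |f y - f x|` over the pairs `x ∼ y` with `x ∈ A`. -/
def totalVariation (A : Finset (Site d)) (f : Site d → ℝ) : ℝ :=
  ∑ x ∈ A, ∑ ε : Dir d, |f (x + dirVec d ε) - f x|

lemma totalVariation_sq_le (A : Finset (Site d)) {f : Site d → ℝ} (hf : f.HasFiniteSupport) :
    totalVariation A f ^ 2 ≤
      2 * d * A.card * ∑ ε : Dir d, shiftDist f (dirVec d ε) ^ 2 := by
  rw [totalVariation, ← Finset.sum_product']
  refine sq_sum_le_card_mul_sum_sq.trans ?_
  rw [Finset.card_product, Finset.card_univ, card_dir, Finset.sum_product_right]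
  simp only [sq_abs]
  calc ((A.card * (2 * d) : ℕ) : ℝ) *
        ∑ ε : Dir d, ∑ x ∈ A, (f (x + dirVec d ε) - f x) ^ 2
      ≤ (A.card * (2 * d) : ℕ) * ∑ ε : Dir d, shiftDist f (dirVec d ε) ^ 2 := by
        gcongr with ε
        rw [shiftDist_sq]
        exact (summable_comp_add_sub_sq hf _).sum_le_tsum A fun _ _ ↦ sq_nonneg _
    _ = 2 * d * A.card * ∑ ε : Dir d, shiftDist f (dirVec d ε) ^ 2 := by
        push_cast
        ring

variable [NeZero d]

lemma sum_sub_eq_mul_laplacian (f : Site d → ℝ) (x : Site d) :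
    ∑ ε : Dir d, (f (x + dirVec d ε) - f x) = 2 * d * laplacian d f x := by
  have hd : (d : ℝ) ≠ 0 := NeZero.ne _
  rw [laplacian_apply]
  field_simp

theorem sum_shiftDist_dirVec_sq {f : Site d → ℝ} (hf : f.HasFiniteSupport) :
    ∑ ε : Dir d, shiftDist f (dirVec d ε) ^ 2 = -(4 * d) * ∑' x, f x * laplacian d f x := by
  have hsummable (ε : Dir d) : Summable fun x ↦ f x * (f (x + dirVec d ε) - f x) :=
    summable_of_hasFiniteSupport (hf.fun_mul_left _)
  simp only [shiftDist_sq_eq_neg_two_mul hf]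
  rw [← Finset.mul_sum, ← Summable.tsum_finsetSum fun ε _ ↦ hsummable ε]
  simp only [← Finset.mul_sum, sum_sub_eq_mul_laplacian, mul_left_comm (f _), tsum_mul_left]
  ring

lemma sum_shiftDist_exitFun_sq (A : Finset (Site d)) :
    ∑ ε : Dir d, shiftDist (exitFun d A) (dirVec d ε) ^ 2 =
      4 * d * ∑ x ∈ A, exitFun d A x := by
  have hlap (x : Site d) : exitFun d A x * laplacian d (exitFun d A) x = -exitFun d A x := by
    by_cases hx : x ∈ A
    · rw [laplacian_exitFun A.finite_toSet hx, mul_neg_one]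
    · rw [exitFun_of_notMem A.finite_toSet (by simpa using hx), zero_mul, neg_zero]
  rw [sum_shiftDist_dirVec_sq (hasFiniteSupport_exitFun A.finite_toSet)]
  simp only [hlap, tsum_neg, tsum_exitFun]
  ring

/-- The Dirichlet energy of `e = e(A)` is a multiple of `∑ e`, so the Faber–Krahn inequality bounds
`∑ e²` by a multiple of `∑ e`, and Cauchy–Schwarz closes the loop. -/
theorem sum_exitFun_le {A : Finset (Site d)} {L : ℕ} (hL : 2 * A.card ≤ L ^ d) :
    ∑ x ∈ A, exitFun d A x ≤ 4 * d ^ 2 * L ^ 2 * A.card := by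
  have hA := A.finite_toSet
  set S := ∑ x ∈ A, exitFun d A x with hS
  have hfab : ∑ x ∈ A, exitFun d A x ^ 2 ≤ d * L ^ 2 * (4 * d * S) := by
    have hvanish : ∀ x, x ∉ A → exitFun d A x = 0 := fun x hx ↦
      exitFun_of_notMem hA (by simpa using hx)
    rw [hS, ← sum_shiftDist_exitFun_sq]
    exact (tsum_eq_sum fun x hx ↦ by rw [hvanish x hx, zero_pow two_ne_zero]).symm.trans_le
      (tsum_sq_le_sum_shiftDist_dirVec hvanish hL)
  have hself : S * S ≤ S * (4 * d ^ 2 * L ^ 2 * A.card) :=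
    calc S * S = S ^ 2 := (sq S).symm
      _ ≤ A.card * ∑ x ∈ A, exitFun d A x ^ 2 := sq_sum_le_card_mul_sum_sq
      _ ≤ A.card * (d * L ^ 2 * (4 * d * S)) := by gcongr
      _ = S * (4 * d ^ 2 * L ^ 2 * A.card) := by ring
  have hS0 : 0 ≤ S := Finset.sum_nonneg fun x _ ↦ exitFun_nonneg hA x
  rcases hS0.eq_or_lt with h | h
  · rw [← h]
    positivity
  · exact le_of_mul_le_mul_left hself h

lemma exitFun_le (A : Finset (Site d)) (x : Site d) :
    exitFun d A x ≤ 16 * d ^ 2 * A.card ^ 3 := by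
  have hA := A.finite_toSet
  by_cases hx : x ∈ A
  · have hsum := sum_exitFun_le (Nat.le_self_pow (NeZero.ne d) (2 * A.card))
    push_cast at hsum
    linarith [Finset.single_le_sum (fun y _ ↦ exitFun_nonneg hA y) hx]
  · rw [exitFun_of_notMem hA (by simpa using hx)]
    positivity

theorem totalVariation_exitFun_le {A : Finset (Site d)} {L : ℕ} (hL : 2 * A.card ≤ L ^ d) :
    totalVariation A (exitFun d A) ≤ 6 * d ^ 2 * L * A.card := by
  refine le_of_sq_le_sq ?_ (by positivity)
  calc totalVariation A (exitFun d A) ^ 2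
      ≤ 2 * d * A.card * (4 * d * ∑ x ∈ A, exitFun d A x) := by
        rw [← sum_shiftDist_exitFun_sq]
        exact totalVariation_sq_le A (hasFiniteSupport_exitFun A.finite_toSet)
    _ ≤ 2 * d * A.card * (4 * d * (4 * d ^ 2 * L ^ 2 * A.card)) := by
        gcongr
        exact sum_exitFun_le hL
    _ ≤ (6 * d ^ 2 * L * A.card) ^ 2 := by
        rw [← sub_nonneg]
        ring_nf
        positivity

theorem totalVariation_exitFun_le_rpow (A : Finset (Site d)) :
    totalVariation A (exitFun d A) ≤ 18 * d ^ 2 * (A.card : ℝ) ^ (1 + 1 / (d : ℝ)) := by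
  rcases A.eq_empty_or_nonempty with rfl | hA
  · simp only [totalVariation, Finset.sum_empty]
    positivity
  have hcard : (1 : ℝ) ≤ A.card := mod_cast hA.card_pos
  have hroot : 1 ≤ (A.card : ℝ) ^ (1 / (d : ℝ)) := Real.one_le_rpow hcard (by positivity)
  set L := ⌈2 * (A.card : ℝ) ^ (1 / (d : ℝ))⌉₊
  have hL : (2 * A.card : ℝ) ≤ (L : ℝ) ^ d :=
    calc (2 * A.card : ℝ) ≤ 2 ^ d * A.card := by
          gcongr
          exact le_self_pow₀ one_le_two (NeZero.ne d)
      _ = (2 * (A.card : ℝ) ^ (1 / (d : ℝ))) ^ d := by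
          rw [mul_pow, one_div, Real.rpow_inv_natCast_pow (by positivity) (NeZero.ne d)]
      _ ≤ (L : ℝ) ^ d := by
          gcongr
          exact Nat.le_ceil _
  calc totalVariation A (exitFun d A)
      ≤ 6 * d ^ 2 * L * A.card := totalVariation_exitFun_le (mod_cast hL)
    _ ≤ 6 * d ^ 2 * (3 * (A.card : ℝ) ^ (1 / (d : ℝ))) * A.card := by
        gcongr
        linarith [Nat.ceil_lt_add_one (by positivity : 0 ≤ 2 * (A.card : ℝ) ^ (1 / (d : ℝ)))]
    _ = 18 * d ^ 2 * (A.card : ℝ) ^ (1 + 1 / (d : ℝ)) := by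
        rw [Real.rpow_add (by positivity), Real.rpow_one]
        ring

end Energy

section Phi

variable {d : ℕ} [NeZero d]

lemma exitFun_le_phi_add (A : Finset (Site d)) (x : Site d) :
    exitFun d A x ≤ phi d A.card + exitFun d (lball d A.card) 0 := by
  have hebar : exitFun d A x ≤ ebar d A :=
    le_csSup ⟨_, Set.forall_mem_range.2 (exitFun_le A)⟩ (Set.mem_range_self x)
  have hphi : ebar d A - exitFun d (lball d A.card) 0 ≤ phi d A.card := by
    refine le_csSup ⟨16 * d ^ 2 * A.card ^ 3 - exitFun d (lball d A.card) 0, ?_⟩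
      ⟨A, A.finite_toSet, Set.ncard_coe_finset A, rfl⟩
    rintro _ ⟨B, hB, hcard, rfl⟩
    lift B to Finset (Site d) using hB
    rw [← hcard, Set.ncard_coe_finset]
    exact sub_le_sub_right
      (csSup_le (Set.range_nonempty _) (Set.forall_mem_range.2 (exitFun_le B))) _
  linarith

/-- The region above the `k`-th largest value of `e(A)` has `k` sites, and its exit time at any
point is at most `φ(k) + e_o(B_k)`. -/
theorem card_succ_mul_exitFun_le (A : Finset (Site d)) (x : Site d) :
    (A.card + 1) * exitFun d A x ≤
      ∑ y ∈ A, exitFun d A y + PhiSum d A.card +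
        ∑ j ∈ Finset.Icc 1 A.card, exitFun d (lball d j) 0 := by
  have hA := A.finite_toSet
  have hlayer : ∀ U ⊆ A, U.Nonempty → ∀ t, (∀ y, y ∉ U → exitFun d A y ≤ t) →
      exitFun d A x - t ≤ phi d U.card + exitFun d (lball d U.card) 0 := fun U hU _ t ht ↦
    (exitFun_sub_le_exitFun hA (mod_cast hU) (by simpa using ht) x).trans (exitFun_le_phi_add U x)
  have hpeel := card_succ_mul_le_sum_add_sum
    (b := fun j ↦ phi d j + exitFun d (lball d j) 0) A hlayer
    (fun y hy ↦ (exitFun_of_notMem hA (by simpa using hy)).le) (fun y _ ↦ exitFun_nonneg hA y)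
  rwa [Finset.sum_add_distrib, zero_add, ← add_assoc] at hpeel

end Phi

section Balls

lemma ballVol_pos (d : ℕ) : 0 < ballVol d :=
  ENNReal.toReal_pos (Metric.measure_ball_pos volume _ one_pos).ne' measure_ball_lt_top.ne

/-- The radius of the Euclidean ball of volume `n` in `ℝ^d`. -/
def ballRadius (d n : ℕ) : ℝ := (n / ballVol d) ^ (1 / (d : ℝ))

lemma ballRadius_eq (d n : ℕ) :
    ballRadius d n = ballVol d ^ (-(1 : ℝ) / d) * (n : ℝ) ^ (1 / (d : ℝ)) := by
  have hω := (ballVol_pos d).le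
  rw [ballRadius, Real.div_rpow n.cast_nonneg hω, neg_div, Real.rpow_neg hω, div_eq_inv_mul]

lemma ballRadius_sq (d n : ℕ) :
    ballRadius d n ^ 2 = ballVol d ^ (-(2 : ℝ) / d) * (n : ℝ) ^ (2 / (d : ℝ)) := by
  rw [ballRadius_eq, mul_pow, ← Real.rpow_mul_natCast (ballVol_pos d).le,
    ← Real.rpow_mul_natCast n.cast_nonneg]
  congr 2 <;> push_cast <;> ring

variable {d : ℕ}

lemma nsq_nonneg (x : Site d) : 0 ≤ nsq x :=
  Finset.sum_nonneg fun _ _ ↦ sq_nonneg _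

lemma enorm_nonneg (x : Site d) : 0 ≤ enorm x :=
  Real.sqrt_nonneg _

lemma enorm_sq (x : Site d) : enorm x ^ 2 = nsq x :=
  Real.sq_sqrt (nsq_nonneg x)

lemma nsq_zero : nsq (0 : Site d) = 0 := by
  simp [nsq]

lemma abs_le_enorm (x : Site d) (i : Fin d) : |(x i : ℝ)| ≤ enorm x :=
  Real.abs_le_sqrt <|
    Finset.single_le_sum (f := fun j ↦ (x j : ℝ) ^ 2) (fun _ _ ↦ sq_nonneg _) (Finset.mem_univ i)

/-- The sign `±1` of a cardinal direction `±e_i`. -/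
def dirSign (ε : Dir d) : ℝ := if ε.2 then 1 else -1

lemma nsq_add_dirVec (x : Site d) (ε : Dir d) :
    nsq (x + dirVec d ε) = nsq x + 2 * dirSign ε * x ε.1 + 1 := by
  have hcoord (j : Fin d) : (((x + dirVec d ε) j : ℤ) : ℝ) ^ 2 =
      (x j : ℝ) ^ 2 + if j = ε.1 then 2 * dirSign ε * x j + 1 else 0 := by
    rcases ε with ⟨i, _ | _⟩ <;> by_cases hj : j = i <;>
      simp [dirVec, unitVec, dirSign, hj] <;> ring
  simp only [nsq, hcoord, Finset.sum_add_distrib, Finset.sum_ite_eq', Finset.mem_univ, if_true]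
  ring

lemma nsq_add_dirVec_le (x : Site d) (ε : Dir d) : nsq (x + dirVec d ε) ≤ (enorm x + 1) ^ 2 := by
  have hsign : dirSign ε * x ε.1 ≤ |(x ε.1 : ℝ)| := by
    unfold dirSign
    split_ifs
    · simpa using le_abs_self _
    · simpa using neg_le_abs _
  rw [nsq_add_dirVec, ← enorm_sq]
  linarith [abs_le_enorm x ε.1]

variable [NeZero d]

lemma enorm_lt_ballRadius {n : ℕ} {x : Site d} (hx : x ∈ lball d n) : enorm x < ballRadius d n := by
  have hpow : enorm x ^ d < n / ballVol d := (lt_div_iff₀' (ballVol_pos d)).2 hx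
  have hx0 := enorm_nonneg x
  calc enorm x = (enorm x ^ d) ^ (1 / (d : ℝ)) := by
        rw [one_div, Real.pow_rpow_inv_natCast hx0 (NeZero.ne d)]
    _ < ballRadius d n := Real.rpow_lt_rpow (by positivity) hpow (by simpa using NeZero.pos d)

lemma zero_mem_lball {n : ℕ} (hn : 1 ≤ n) : (0 : Site d) ∈ lball d n := by
  have hn' : 0 < n := hn
  simpa [lball, enorm, nsq_zero, NeZero.ne d] using hn'

lemma lball_finite (n : ℕ) : (lball d n).Finite := by
  refine (Set.finite_Icc (fun _ ↦ -⌈ballRadius d n⌉ : Site d) fun _ ↦ ⌈ballRadius d n⌉).subset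
    fun x hx ↦ ?_
  have hcoord (i : Fin d) : |x i| ≤ ⌈ballRadius d n⌉ := by
    have hle := (abs_le_enorm x i).trans ((enorm_lt_ballRadius hx).le.trans (Int.le_ceil _))
    exact_mod_cast hle
  exact ⟨fun i ↦ (abs_le.1 (hcoord i)).1, fun i ↦ (abs_le.1 (hcoord i)).2⟩

lemma laplacian_nsq (x : Site d) : laplacian d nsq x = 1 := by
  have hd : (d : ℝ) ≠ 0 := NeZero.ne _
  have hsum : ∑ ε : Dir d, (nsq (x + dirVec d ε) - nsq x) = 2 * d := by
    simp [nsq_add_dirVec, dirSign, Fintype.sum_prod_type, Finset.sum_add_distrib]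
    ring
  rw [laplacian_apply, hsum]
  field_simp

/-- Compare with the paraboloid `(R + 1)² - ‖x‖²`, `R` the radius of the ball of volume `n`, which
has Laplacian `-1` and is nonnegative on the boundary of `B_n`. -/
theorem exitFun_lball_le {n : ℕ} (hn : 1 ≤ n) :
    exitFun d (lball d n) 0 ≤ (ballRadius d n + 1) ^ 2 := by
  have hfin := lball_finite (d := d) n
  have hle := le_of_laplacian_le hfin (f := exitFun d (lball d n))
    (g := (fun _ ↦ (ballRadius d n + 1) ^ 2) - nsq)
    (fun x hx ↦ by
      rw [map_sub, laplacian_const, laplacian_exitFun hfin hx]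
      simp [laplacian_nsq])
    (fun x hx ε h ↦ ?_) (zero_mem_lball hn)
  · simpa [nsq_zero] using hle
  · rw [exitFun_of_notMem hfin h]
    have hx0 := enorm_nonneg x
    have hsq : (enorm x + 1) ^ 2 ≤ (ballRadius d n + 1) ^ 2 := by
      gcongr
      exact (enorm_lt_ballRadius hx).le
    exact sub_nonneg.2 ((nsq_add_dirVec_le x ε).trans hsq)

lemma sum_exitFun_lball_le_sum {n : ℕ} (hn : 1 ≤ n) :
    ∑ j ∈ Finset.Icc 1 n, exitFun d (lball d j) 0 ≤
      ballVol d ^ (-(2 : ℝ) / d) * ∑ j ∈ Finset.Icc 1 n, (j : ℝ) ^ (2 / (d : ℝ)) +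
        (2 * ballVol d ^ (-(1 : ℝ) / d) + 1) * (n : ℝ) ^ (1 + 1 / (d : ℝ)) := by
  have hω := ballVol_pos d
  have hroot : 1 ≤ (n : ℝ) ^ (1 / (d : ℝ)) := Real.one_le_rpow (mod_cast hn) (by positivity)
  have hterm (j : ℕ) (hj : j ∈ Finset.Icc 1 n) : exitFun d (lball d j) 0 ≤
      ballVol d ^ (-(2 : ℝ) / d) * (j : ℝ) ^ (2 / (d : ℝ)) +
        (2 * ballVol d ^ (-(1 : ℝ) / d) + 1) * (n : ℝ) ^ (1 / (d : ℝ)) := by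
    obtain ⟨hj1, hjn⟩ := Finset.mem_Icc.1 hj
    have hradius : ballRadius d j ≤ ballVol d ^ (-(1 : ℝ) / d) * (n : ℝ) ^ (1 / (d : ℝ)) := by
      rw [ballRadius_eq]
      gcongr
    calc exitFun d (lball d j) 0
        ≤ (ballRadius d j + 1) ^ 2 := exitFun_lball_le hj1
      _ = ballRadius d j ^ 2 + 2 * ballRadius d j + 1 := by ring
      _ ≤ _ := by
        rw [ballRadius_sq]
        linarith
  refine (Finset.sum_le_sum hterm).trans_eq ?_
  rw [Finset.sum_add_distrib, ← Finset.mul_sum, Finset.sum_const, Nat.card_Icc, nsmul_eq_mul,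
    Nat.add_sub_cancel, Real.rpow_add (mod_cast hn), Real.rpow_one, mul_left_comm]

lemma sum_rpow_le {p : ℝ} (hp : 0 ≤ p) (n : ℕ) :
    ∑ j ∈ Finset.Icc 1 n, (j : ℝ) ^ p ≤ (n : ℝ) ^ (p + 1) / (p + 1) + (n : ℝ) ^ p := by
  rcases n.eq_zero_or_pos with rfl | hn
  · simp only [Finset.Icc_eq_empty_of_lt zero_lt_one, Finset.sum_empty]
    positivity
  have hmono : MonotoneOn (fun x : ℝ ↦ x ^ p) (Set.Icc (1 : ℕ) n) := fun x hx y _ hxy ↦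
    Real.rpow_le_rpow ((Nat.cast_nonneg 1).trans hx.1) hxy hp
  rw [← Finset.sum_Ico_add_eq_sum_Icc hn]
  gcongr
  calc ∑ j ∈ Finset.Ico 1 n, (j : ℝ) ^ p
      ≤ ∫ x in (1 : ℕ)..n, x ^ p := hmono.sum_le_integral_Ico hn
    _ = ((n : ℝ) ^ (p + 1) - 1) / (p + 1) := by
        rw [integral_rpow (.inl (by linarith)), Nat.cast_one, Real.one_rpow]
    _ ≤ (n : ℝ) ^ (p + 1) / (p + 1) := by
        gcongr
        exact sub_le_self _ zero_le_one

theorem sum_exitFun_lball_le {n : ℕ} (hn : 1 ≤ n) :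
    ∑ j ∈ Finset.Icc 1 n, exitFun d (lball d j) 0 ≤
      d / (d + 2) * ballVol d ^ (-(2 : ℝ) / d) * (n : ℝ) ^ (1 + 2 / (d : ℝ)) +
        (ballVol d ^ (-(2 : ℝ) / d) + 2 * ballVol d ^ (-(1 : ℝ) / d) + 1) *
          (n : ℝ) ^ (1 + 1 / (d : ℝ)) := by
  have hω := ballVol_pos d
  have hd : (1 : ℝ) ≤ d := mod_cast NeZero.one_le
  have hpow : (n : ℝ) ^ (2 / (d : ℝ)) ≤ (n : ℝ) ^ (1 + 1 / (d : ℝ)) := by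
    refine Real.rpow_le_rpow_of_exponent_le (mod_cast hn) ?_
    field_simp
    linarith
  have hmain : (n : ℝ) ^ (2 / (d : ℝ) + 1) / (2 / (d : ℝ) + 1) =
      d / (d + 2) * (n : ℝ) ^ (1 + 2 / (d : ℝ)) := by
    rw [add_comm (2 / (d : ℝ)) 1]
    field_simp
  refine (sum_exitFun_lball_le_sum hn).trans ?_
  calc _ ≤ ballVol d ^ (-(2 : ℝ) / d) *
          (d / (d + 2) * (n : ℝ) ^ (1 + 2 / (d : ℝ)) + (n : ℝ) ^ (1 + 1 / (d : ℝ))) +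
        (2 * ballVol d ^ (-(1 : ℝ) / d) + 1) * (n : ℝ) ^ (1 + 1 / (d : ℝ)) := by
        gcongr
        exact (sum_rpow_le (by positivity) n).trans (by rw [hmain]; gcongr)
    _ = _ := by ring

end Balls

section RotorWalk

/-- The total weight of the cards used so far, when the `i`-th card of the stack at `x` has weight
`h x i` and the top `c x` cards of the stack at each `x ∈ B` have been used. -/
def stackSum {ι M : Type*} [AddCommMonoid M] (B : Finset ι) (h : ι → ℕ → M) (c : ι → ℕ) : M :=
  ∑ x ∈ B, ∑ i ∈ Finset.range (c x), h x i

lemma stackSum_update_add_one {ι M : Type*} [DecidableEq ι] [AddCommMonoid M] {B : Finset ι}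
    {p : ι} (hp : p ∈ B) (h : ι → ℕ → M) (c : ι → ℕ) :
    stackSum B h (Function.update c p (c p + 1)) = stackSum B h c + h p (c p) := by
  have hrest : ∀ x ∈ B.erase p, ∑ i ∈ Finset.range (Function.update c p (c p + 1) x), h x i =
      ∑ i ∈ Finset.range (c x), h x i := fun x hx ↦ by
    rw [Function.update_of_ne (Finset.ne_of_mem_erase hx)]
  rw [stackSum, stackSum, ← Finset.sum_erase_add B _ hp, ← Finset.sum_erase_add B _ hp,
    Finset.sum_congr rfl hrest, Function.update_self, Finset.sum_range_succ, add_assoc]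

variable {d : ℕ} {r : Site d → ℕ → Dir d} {B : Finset (Site d)} {c : Site d → ℕ}

lemma walkState_succ (r : Site d → ℕ → Dir d) (c : Site d → ℕ) (t : ℕ) :
    walkState r c (t + 1) = rstep r (walkState r c t) :=
  Function.iterate_succ_apply' _ _ _

lemma stackSum_walkState {M : Type*} [AddCommMonoid M] (h : Site d → ℕ → M) {t : ℕ}
    (hB : ∀ s < t, (walkState r c s).1 ∈ B) :
    stackSum B h (walkState r c t).2 = stackSum B h c +
      ∑ s ∈ Finset.range t,
        h (walkState r c s).1 ((walkState r c s).2 (walkState r c s).1) := by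
  induction t with
  | zero => simp [walkState]
  | succ t ih =>
    rw [Finset.sum_range_succ, ← add_assoc, ← ih fun s hs ↦ hB s (hs.trans t.lt_succ_self),
      walkState_succ]
    exact stackSum_update_add_one (hB t t.lt_succ_self) h _

/-- The increment of `f` along the `(i+1)`-st rotor at `x`. -/
def rotorGain (r : Site d → ℕ → Dir d) (f : Site d → ℝ) (x : Site d) (i : ℕ) : ℝ :=
  f (x + dirVec d (r x i)) - f x

lemma stackSum_rotorGain_walkState (f : Site d → ℝ) {t : ℕ}
    (hB : ∀ s < t, (walkState r c s).1 ∈ B) :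
    stackSum B (rotorGain r f) (walkState r c t).2 =
      stackSum B (rotorGain r f) c + (f (walkState r c t).1 - f 0) := by
  have hstep (s : ℕ) :
      rotorGain r f (walkState r c s).1 ((walkState r c s).2 (walkState r c s).1) =
        f (walkState r c (s + 1)).1 - f (walkState r c s).1 := by
    rw [walkState_succ]
    rfl
  rw [stackSum_walkState _ hB]
  simp only [hstep]
  rw [Finset.sum_range_sub fun s ↦ f (walkState r c s).1]
  rfl

lemma sum_walkState {t : ℕ} (hB : ∀ s < t, (walkState r c s).1 ∈ B) :
    ∑ x ∈ B, (walkState r c t).2 x = ∑ x ∈ B, c x + t := by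
  simpa [stackSum] using stackSum_walkState (fun _ _ ↦ (1 : ℕ)) hB

namespace HasDiscrepancy

variable {D : ℝ} [NeZero d]

lemma half_le (hr : HasDiscrepancy d D r) : 1 / 2 ≤ D := by
  have hd : (1 : ℝ) ≤ d := mod_cast NeZero.one_le
  have hone : ({i | i < 1 ∧ r 0 i = r 0 0} : Set ℕ) = {0} := by
    ext i
    simp +contextual
  have hdisc := hr 0 (r 0 0) 1 le_rfl
  rw [hone, Set.ncard_singleton] at hdisc
  have hhalf : 1 / (2 * (d : ℝ)) ≤ 1 / 2 := by
    gcongr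
    linarith
  push_cast at hdisc
  linarith [le_abs_self (1 - 1 / (2 * (d : ℝ)))]

lemma pos (hr : HasDiscrepancy d D r) : 0 < D :=
  one_half_pos.trans_le hr.half_le

lemma abs_sum_rotorGain_sub_le (hr : HasDiscrepancy d D r) (f : Site d → ℝ) (x : Site d) (m : ℕ) :
    |∑ i ∈ Finset.range m, rotorGain r f x i - m * laplacian d f x| ≤
      D * ∑ ε : Dir d, |f (x + dirVec d ε) - f x| := by
  have hD := hr.pos
  rcases m.eq_zero_or_pos with rfl | hm
  · simp only [Finset.range_zero, Finset.sum_empty, Nat.cast_zero, zero_mul, sub_zero, abs_zero]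
    positivity
  let uses : Dir d → ℝ := fun ε ↦ ({i | i < m ∧ r x i = ε} : Set ℕ).ncard
  have hgain : ∑ i ∈ Finset.range m, rotorGain r f x i =
      ∑ ε, uses ε * (f (x + dirVec d ε) - f x) := by
    rw [← Finset.sum_fiberwise (Finset.range m) (r x)]
    refine Finset.sum_congr rfl fun ε _ ↦ ?_
    have hset : ({i | i < m ∧ r x i = ε} : Set ℕ) = {i ∈ Finset.range m | r x i = ε} := by
      ext i
      simp
    simp only [uses]
    rw [hset, Set.ncard_coe_finset, ← nsmul_eq_mul]
    refine Finset.sum_eq_card_nsmul fun i hi ↦ ?_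
    rw [rotorGain, (Finset.mem_filter.1 hi).2]
  have hmean : m * laplacian d f x =
      ∑ ε : Dir d, (m / (2 * d) : ℝ) * (f (x + dirVec d ε) - f x) := by
    rw [laplacian_apply, ← Finset.mul_sum]
    ring
  calc |∑ i ∈ Finset.range m, rotorGain r f x i - m * laplacian d f x|
      = |∑ ε : Dir d, (uses ε - m / (2 * d)) * (f (x + dirVec d ε) - f x)| := by
        rw [hgain, hmean, ← Finset.sum_sub_distrib]
        simp only [sub_mul]
    _ ≤ ∑ ε : Dir d, |uses ε - m / (2 * d)| * |f (x + dirVec d ε) - f x| :=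
        (Finset.abs_sum_le_sum_abs _ _).trans_eq (by simp only [abs_mul])
    _ ≤ ∑ ε : Dir d, D * |f (x + dirVec d ε) - f x| := by
        gcongr with ε
        exact hr x ε m hm
    _ = D * ∑ ε : Dir d, |f (x + dirVec d ε) - f x| := (Finset.mul_sum _ _ _).symm

/-- Each visit to a site of `B` lowers the exit time function by `1`, up to rotor discrepancy. -/
lemma sum_le_neg_stackSum_add (hr : HasDiscrepancy d D r) (B : Finset (Site d))
    (c : Site d → ℕ) :
    (∑ x ∈ B, c x : ℕ) ≤
      -stackSum B (rotorGain r (exitFun d B)) c + D * totalVariation B (exitFun d B) := by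
  rw [stackSum, totalVariation, Finset.mul_sum, ← Finset.sum_neg_distrib,
    ← Finset.sum_add_distrib, Nat.cast_sum]
  refine Finset.sum_le_sum fun x hx ↦ ?_
  have hgain := hr.abs_sum_rotorGain_sub_le (exitFun d B) x (c x)
  rw [laplacian_exitFun B.finite_toSet hx] at hgain
  linarith [(abs_le.1 hgain).2]

theorem exists_walkState_notMem (hr : HasDiscrepancy d D r) (B : Finset (Site d))
    (c : Site d → ℕ) : ∃ t, (walkState r c t).1 ∉ B := by
  by_contra! hstay
  set e := exitFun d (B : Set (Site d))
  obtain ⟨t, ht⟩ :=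
    exists_nat_gt (-stackSum B (rotorGain r e) c + e 0 + D * totalVariation B e)
  have hvisits := hr.sum_le_neg_stackSum_add B (walkState r c t).2
  rw [sum_walkState fun s _ ↦ hstay s, stackSum_rotorGain_walkState _ fun s _ ↦ hstay s]
    at hvisits
  push_cast at hvisits
  have hnonneg : (0 : ℝ) ≤ ∑ x ∈ B, (c x : ℝ) := by positivity
  linarith [exitFun_nonneg B.finite_toSet (walkState r c t).1]

lemma walkState_exitSteps_notMem (hr : HasDiscrepancy d D r) (B : Finset (Site d))
    (c : Site d → ℕ) : (walkState r c (exitSteps r B c)).1 ∉ B :=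
  fun hmem ↦ Nat.sInf_mem (s := {t | (walkState r c t).1 ∉ (B : Set (Site d))})
    (hr.exists_walkState_notMem B c) hmem

end HasDiscrepancy

lemma walkState_mem_of_lt_exitSteps {A : Set (Site d)} {s : ℕ} (hs : s < exitSteps r A c) :
    (walkState r c s).1 ∈ A :=
  not_not.1 (Nat.notMem_of_lt_sInf hs)

end RotorWalk

section Aggregation

variable {d : ℕ} {r : Site d → ℕ → Dir d} {D : ℝ} {B : Finset (Site d)} {n : ℕ}

lemma finite_aggState (r : Site d → ℕ → Dir d) (n : ℕ) : (aggState r n).1.Finite := by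
  induction n with
  | zero => exact Set.finite_singleton _
  | succ n ih => exact ih.insert _

/-- The region `A_{n+1}` occupied once `n` particles have settled, as a finite set. -/
def occupied (r : Site d → ℕ → Dir d) (n : ℕ) : Finset (Site d) :=
  (finite_aggState r n).toFinset

/-- The number of visits to each site by the first `n` particles. -/
def odometer (r : Site d → ℕ → Dir d) (n : ℕ) : Site d → ℕ :=
  (aggState r n).2.1

/-- The number of steps taken by the `(n+1)`-st particle. -/
def walkLength (r : Site d → ℕ → Dir d) (n : ℕ) : ℕ :=
  exitSteps r (occupied r n) (odometer r n)

/-- The site at which the `(n+1)`-st particle settles. -/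
def settlingSite (r : Site d → ℕ → Dir d) (n : ℕ) : Site d :=
  (walkState r (odometer r n) (walkLength r n)).1

lemma walkLength_eq (r : Site d → ℕ → Dir d) (n : ℕ) :
    walkLength r n = exitSteps r (aggState r n).1 (aggState r n).2.1 := by
  rw [walkLength, occupied, Set.Finite.coe_toFinset, odometer]

lemma occupied_zero (r : Site d → ℕ → Dir d) : occupied r 0 = {0} :=
  Set.Finite.toFinset_singleton _

lemma occupied_succ (r : Site d → ℕ → Dir d) (n : ℕ) :
    occupied r (n + 1) = insert (settlingSite r n) (occupied r n) := by
  rw [settlingSite, walkLength_eq]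
  exact Set.Finite.toFinset_insert _

lemma odometer_succ (r : Site d → ℕ → Dir d) (n : ℕ) :
    odometer r (n + 1) = (walkState r (odometer r n) (walkLength r n)).2 := by
  rw [walkLength_eq]
  rfl

lemma totalSteps_succ (r : Site d → ℕ → Dir d) (n : ℕ) :
    totalSteps r (n + 1) = totalSteps r n + walkLength r n := by
  rw [walkLength_eq]
  rfl

lemma occupied_mono (r : Site d → ℕ → Dir d) : Monotone (occupied r) :=
  monotone_nat_of_le_succ fun n ↦ by
    rw [occupied_succ]
    exact Finset.subset_insert _ _

lemma walkState_odometer_mem_occupied {s : ℕ} (hs : s < walkLength r n) :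
    (walkState r (odometer r n) s).1 ∈ occupied r n :=
  walkState_mem_of_lt_exitSteps hs

lemma sum_odometer (hB : ∀ k < n, occupied r k ⊆ B) :
    ∑ x ∈ B, odometer r n x = totalSteps r n := by
  induction n with
  | zero => simp [odometer, totalSteps, aggState]
  | succ n ih =>
    rw [odometer_succ, totalSteps_succ, ← ih fun k hk ↦ hB k (hk.trans n.lt_succ_self)]
    exact sum_walkState fun s hs ↦ hB n n.lt_succ_self (walkState_odometer_mem_occupied hs)

namespace HasDiscrepancy

variable [NeZero d]

lemma settlingSite_notMem (hr : HasDiscrepancy d D r) (n : ℕ) :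
    settlingSite r n ∉ occupied r n :=
  hr.walkState_exitSteps_notMem _ _

lemma card_occupied (hr : HasDiscrepancy d D r) (n : ℕ) : (occupied r n).card = n + 1 := by
  induction n with
  | zero => rw [occupied_zero, Finset.card_singleton]
  | succ n ih => rw [occupied_succ, Finset.card_insert_of_notMem (hr.settlingSite_notMem n), ih]

lemma stackSum_rotorGain_odometer (hr : HasDiscrepancy d D r) (f : Site d → ℝ)
    (hB : ∀ k < n, occupied r k ⊆ B) :
    stackSum B (rotorGain r f) (odometer r n) = ∑ x ∈ occupied r n, f x - (n + 1) * f 0 := by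
  induction n with
  | zero => simp [stackSum, odometer, aggState, occupied_zero]
  | succ n ih =>
    rw [odometer_succ, stackSum_rotorGain_walkState f fun s hs ↦
        hB n n.lt_succ_self (walkState_odometer_mem_occupied hs),
      ih fun k hk ↦ hB k (hk.trans n.lt_succ_self), occupied_succ,
      Finset.sum_insert (hr.settlingSite_notMem n), settlingSite]
    push_cast
    ring

theorem totalSteps_succ_le (hr : HasDiscrepancy d D r) (n : ℕ) :
    (totalSteps r (n + 1) : ℝ) ≤
      (n + 2) * exitFun d (occupied r n) 0 - ∑ x ∈ occupied r n, exitFun d (occupied r n) x +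
        D * totalVariation (occupied r n) (exitFun d (occupied r n)) := by
  set B := occupied r n
  have hB (k : ℕ) (hk : k < n + 1) : occupied r k ⊆ B := occupied_mono r (Nat.le_of_lt_succ hk)
  have hvisits := hr.sum_le_neg_stackSum_add B (odometer r (n + 1))
  have hsum : ∑ x ∈ occupied r (n + 1), exitFun d B x = ∑ x ∈ B, exitFun d B x :=
    (Finset.sum_subset (occupied_mono r n.le_succ) fun x _ hx ↦
      exitFun_of_notMem B.finite_toSet hx).symm
  rw [sum_odometer hB, hr.stackSum_rotorGain_odometer _ hB, hsum] at hvisits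
  push_cast at hvisits
  linarith

end HasDiscrepancy

end Aggregation

theorem lemma_Tn_general (d : ℕ) (hd : 1 ≤ d) :
    ∃ C : ℝ, ∀ (D : ℝ) (r : Site d → ℕ → Dir d), HasDiscrepancy d D r →
      ∀ n : ℕ, 1 ≤ n →
        (totalSteps r n : ℝ) ≤ (d : ℝ) / ((d : ℝ) + 2) * ballVol d ^ (-(2 : ℝ) / (d : ℝ))
            * (n : ℝ) ^ (1 + 2 / (d : ℝ)) + PhiSum d n + C * D * (n : ℝ) ^ (1 + 1 / (d : ℝ)) := by
  have : NeZero d := ⟨by lia⟩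
  let a := ballVol d ^ (-(2 : ℝ) / d) + 2 * ballVol d ^ (-(1 : ℝ) / d) + 1
  have hω := (ballVol_pos d).le
  refine ⟨2 * a + 18 * d ^ 2, fun D r hr n hn ↦ ?_⟩
  obtain ⟨m, rfl⟩ := Nat.exists_eq_add_of_le' hn
  have hsteps := hr.totalSteps_succ_le m
  have hmax := card_succ_mul_exitFun_le (occupied r m) 0
  have hballs := sum_exitFun_lball_le (d := d) hn
  have hvar := mul_le_mul_of_nonneg_left (totalVariation_exitFun_le_rpow (occupied r m)) hr.pos.le
  rw [hr.card_occupied] at hmax hvar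
  have habsorb : a * ((m + 1 : ℕ) : ℝ) ^ (1 + 1 / (d : ℝ)) ≤
      2 * a * D * ((m + 1 : ℕ) : ℝ) ^ (1 + 1 / (d : ℝ)) := by
    gcongr
    nlinarith [hr.half_le, show 0 ≤ a by positivity]
  push_cast at *
  linarith

theorem lemma_Tn (d : ℕ) (hd : 1 ≤ d) :
    ∃ C : ℝ, ∀ (D : ℝ), 1 ≤ D → ∀ r : Site d → ℕ → Dir d, HasDiscrepancy d D r →
      ∀ n : ℕ, 1 ≤ n →
        (totalSteps r n : ℝ) ≤ (d : ℝ) / ((d : ℝ) + 2) * ballVol d ^ (-(2 : ℝ) / (d : ℝ))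
            * (n : ℝ) ^ (1 + 2 / (d : ℝ)) + PhiSum d n + C * D * (n : ℝ) ^ (1 + 1 / (d : ℝ)) := by
  obtain ⟨C, hC⟩ := lemma_Tn_general d hd
  exact ⟨C, fun D _ r hr n hn ↦ hC D r hr n hn⟩

end RotorRouterPaper
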